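/- Let μ be a finite Borel measure on ℝ and define p(x, t) = ∫_ℝ (2π(1 − e^{−t}))^{−1/2} exp(−(x − y e^{−t/2})²/(2(1 − e^{−t}))) dμ(y) for t > 0 and x ∈ ℝ. Then p is smooth on ℝ × (0, ∞) and satisfies the Fokker–Planck equation ∂_t p(x, t) = (1/2) ∂_x ( x · p(x, t) ) + (1/2) ∂²_x p(x, t) for all x ∈ ℝ and t > 0. -/

import Mathlib

open MeasureTheory Real

noncomputable section

/-- The marginal density at time `t` of the OU process started from `μ`. -/
def pMarg (μ : Measure ℝ) (x t : ℝ) : ℝ :=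
  ∫ y, (2 * π * (1 - Real.exp (-t))) ^ (-(1:ℝ)/2) *
    Real.exp (-(x - y * Real.exp (-t / 2)) ^ 2 / (2 * (1 - Real.exp (-t)))) ∂μ

/-!
If `X` is the Ornstein–Uhlenbeck process with initial distribution `μ`, then `e^{t/2} X_t` has the
law of `B_s` with `s = e^t - 1`, where `B` is a Brownian motion with the same initial distribution.
Hence `p(x, t) = e^{t/2} u(e^{t/2} x, e^t - 1)`, where `u` is the convolution of `μ` with the heat
kernel, and the chain rule turns the heat equation for `u` into the Fokker–Planck equation for `p`.

For `u` itself, with `c = 1 / (2s)`, one differentiates `∫ P(z - y) e^{-c (z - y)²} dμ(y)` under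
the integral sign for all polynomials `P` at once. The functions `P(w) e^{-c w²}` are bounded,
uniformly for `c` bounded away from `0`, so they are dominated because `μ` is finite; and the
derivatives are combinations of integrals of the same form, so smoothness follows by induction on
the order.
-/

section PolyGauss

open Polynomial Set Filter Topology ContinuousLinearMap

/-- A polynomial times a Gaussian, `P(w) e^{-c w²}` at `q = (w, c)`; these form a class closed under
differentiation. The second variable is `c` rather than the variance `1 / (2c)` because this keeps
reciprocals out of the derivatives. -/
def polyGauss (P : ℝ[X]) (q : ℝ × ℝ) : ℝ := P.eval q.1 * exp (-q.2 * q.1 ^ 2)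

variable (P : ℝ[X])

lemma contDiff_polyGauss {n : WithTop ℕ∞} : ContDiff ℝ n (polyGauss P) := by
  have hP : ContDiff ℝ n fun w => P.eval w := by
    simpa using P.contDiff_aeval (𝕜 := ℝ) n
  unfold polyGauss
  fun_prop

lemma hasFDerivAt_polyGauss (q : ℝ × ℝ) :
    HasFDerivAt (polyGauss P)
      ((polyGauss (derivative P) q - 2 * q.2 * polyGauss (X * P) q) • fst ℝ ℝ ℝ -
        polyGauss (X ^ 2 * P) q • snd ℝ ℝ ℝ) q := by
  have hP := (P.hasDerivAt q.1).comp_hasFDerivAt q (hasFDerivAt_fst (𝕜 := ℝ) (p := q))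
  have hexp := (hasFDerivAt_snd (𝕜 := ℝ) (p := q)).neg.mul
    ((hasFDerivAt_fst (𝕜 := ℝ) (p := q)).pow 2) |>.exp
  refine (hP.mul hexp).congr_fderiv ?_
  ext <;> simp [polyGauss] <;> ring

lemma tendsto_polyGauss_cocompact {c : ℝ} (hc : 0 < c) :
    Tendsto (fun w => polyGauss P (w, c)) (cocompact ℝ) (𝓝 0) := by
  induction P using Polynomial.induction_on' with
  | add P Q hP hQ => simpa [polyGauss, add_mul] using hP.add hQ
  | monomial k a =>
    rw [tendsto_zero_iff_abs_tendsto_zero]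
    simpa [polyGauss, Function.comp_def, abs_mul, mul_assoc] using
      (tendsto_rpow_abs_mul_exp_neg_mul_sq_cocompact hc k).const_mul |a|

lemma exists_abs_polyGauss_le {d : ℝ} (hd : 0 < d) :
    ∃ C, ∀ q : ℝ × ℝ, d ≤ q.2 → |polyGauss P q| ≤ C := by
  have hcont : Continuous fun w => polyGauss P (w, d) :=
    (contDiff_polyGauss P (n := 0)).continuous.comp (by fun_prop)
  have hbdd := hcont.isBounded_range_iff_isBigO.2
    ((tendsto_polyGauss_cocompact P hd).isBigO_one ℝ)
  obtain ⟨C, hC⟩ := isBounded_iff_forall_norm_le.1 hbdd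
  refine ⟨C, fun q hq => ?_⟩
  calc |polyGauss P q| = |P.eval q.1| * exp (-q.2 * q.1 ^ 2) := by
        rw [polyGauss, abs_mul, abs_exp]
    _ ≤ |P.eval q.1| * exp (-d * q.1 ^ 2) := by gcongr
    _ = |polyGauss P (q.1, d)| := by rw [polyGauss, abs_mul, abs_exp]
    _ ≤ C := hC _ ⟨q.1, rfl⟩

lemma exists_norm_fderiv_polyGauss_le {d D : ℝ} (hd : 0 < d) :
    ∃ C, ∀ q : ℝ × ℝ, q.2 ∈ Icc d D → ‖fderiv ℝ (polyGauss P) q‖ ≤ C := by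
  obtain ⟨C₀, h₀⟩ := exists_abs_polyGauss_le (derivative P) hd
  obtain ⟨C₁, h₁⟩ := exists_abs_polyGauss_le (X * P) hd
  obtain ⟨C₂, h₂⟩ := exists_abs_polyGauss_le (X ^ 2 * P) hd
  refine ⟨C₀ + 2 * D * C₁ + C₂, fun q ⟨hdq, hqD⟩ => ?_⟩
  have hq : 0 < q.2 := hd.trans_le hdq
  rw [(hasFDerivAt_polyGauss P q).fderiv]
  calc _ ≤ ‖polyGauss (derivative P) q - 2 * q.2 * polyGauss (X * P) q‖ * ‖fst ℝ ℝ ℝ‖ +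
          ‖polyGauss (X ^ 2 * P) q‖ * ‖snd ℝ ℝ ℝ‖ :=
        (norm_sub_le _ _).trans_eq (by rw [norm_smul, norm_smul])
    _ ≤ (|polyGauss (derivative P) q| + 2 * q.2 * |polyGauss (X * P) q|) * 1 +
          |polyGauss (X ^ 2 * P) q| * 1 := by
        gcongr
        · simpa [abs_mul, abs_of_pos hq] using
            norm_sub_le (polyGauss (derivative P) q) (2 * q.2 * polyGauss (X * P) q)
        · exact norm_fst_le ℝ ℝ ℝ
        · rfl
        · exact norm_snd_le ℝ ℝ ℝ
    _ ≤ C₀ + 2 * D * C₁ + C₂ := by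
        have := h₀ q hdq
        have := h₁ q hdq
        have := h₂ q hdq
        simp only [mul_one]
        gcongr
        linarith

/-- The convolution `∫ P(z - y) e^{-c (z - y)²} dμ(y)` at `q = (z, c)`, in the first coordinate
only; the heat flow is a multiple of the case `P = 1`. -/
def polyGaussConv (P : ℝ[X]) (μ : Measure ℝ) (q : ℝ × ℝ) : ℝ :=
  ∫ y, polyGauss P (q - (y, 0)) ∂μ

variable (μ : Measure ℝ) [IsFiniteMeasure μ]

lemma integrable_polyGauss_sub {q : ℝ × ℝ} (hq : 0 < q.2) :
    Integrable (fun y : ℝ => polyGauss P (q - (y, 0))) μ := by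
  obtain ⟨C, hC⟩ := exists_abs_polyGauss_le P hq
  have hcont := (contDiff_polyGauss P (n := 0)).continuous
  exact .of_bound (by fun_prop : Continuous _).aestronglyMeasurable C
    (.of_forall fun y => hC _ (by simp))

lemma hasFDerivAt_polyGaussConv {q : ℝ × ℝ} (hq : 0 < q.2) :
    HasFDerivAt (polyGaussConv P μ)
      ((polyGaussConv (derivative P) μ q - 2 * q.2 * polyGaussConv (X * P) μ q) • fst ℝ ℝ ℝ -
        polyGaussConv (X ^ 2 * P) μ q • snd ℝ ℝ ℝ) q := by
  obtain ⟨C, hC⟩ := exists_norm_fderiv_polyGauss_le P (D := 2 * q.2) (half_pos hq)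
  have hstrip : {p : ℝ × ℝ | p.2 ∈ Icc (q.2 / 2) (2 * q.2)} ∈ 𝓝 q :=
    continuous_snd.continuousAt.preimage_mem_nhds (Icc_mem_nhds (by linarith) (by linarith))
  have hcont := (contDiff_polyGauss P (n := 1)).continuous
  have hcont' := (contDiff_polyGauss P (n := 1)).continuous_fderiv one_ne_zero
  have hderiv := hasFDerivAt_integral_of_dominated_of_fderiv_le (μ := μ) (𝕜 := ℝ)
    (F := fun p y => polyGauss P (p - (y, 0)))
    (F' := fun p y => fderiv ℝ (polyGauss P) (p - (y, 0))) hstrip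
    (.of_forall fun p => (by fun_prop : Continuous _).aestronglyMeasurable)
    (integrable_polyGauss_sub P μ hq) (by fun_prop : Continuous _).aestronglyMeasurable
    (.of_forall fun y p hp => hC _ (by simpa using hp)) (integrable_const C)
    (.of_forall fun y p _ => (hasFDerivAt_comp_sub (y, 0)).2
      ((contDiff_polyGauss P (n := 1)).differentiable one_ne_zero _).hasFDerivAt)
  have h₀ := integrable_polyGauss_sub (derivative P) μ hq
  have h₁ := (integrable_polyGauss_sub (X * P) μ hq).const_mul (2 * q.2)
  have h₀₁ : Integrable (fun y : ℝ => polyGauss (derivative P) (q - (y, 0)) -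
      2 * q.2 * polyGauss (X * P) (q - (y, 0))) μ := h₀.sub h₁
  have h₂ := integrable_polyGauss_sub (X ^ 2 * P) μ hq
  refine hderiv.congr_fderiv ?_
  simp only [(hasFDerivAt_polyGauss P _).fderiv, Prod.snd_sub, sub_zero]
  rw [integral_sub (h₀₁.smul_const _) (h₂.smul_const _), integral_smul_const,
    integral_smul_const, integral_sub h₀ h₁, integral_const_mul]
  rfl

lemma contDiffOn_polyGaussConv :
    ContDiffOn ℝ (⊤ : ℕ∞) (polyGaussConv P μ) (univ ×ˢ Ioi 0) := by
  have hopen : IsOpen (univ ×ˢ Ioi 0 : Set (ℝ × ℝ)) := isOpen_univ.prod isOpen_Ioi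
  rw [contDiffOn_infty]
  intro n
  induction n generalizing P with
  | zero =>
    exact contDiffOn_zero.2 fun q hq =>
      (hasFDerivAt_polyGaussConv P μ hq.2).continuousAt.continuousWithinAt
  | succ n ih =>
    rw [Nat.cast_succ, contDiffOn_succ_iff_fderiv_of_isOpen hopen]
    refine ⟨fun q hq =>
      (hasFDerivAt_polyGaussConv P μ hq.2).differentiableAt.differentiableWithinAt, by simp, ?_⟩
    refine ContDiffOn.congr ?_ fun q hq => (hasFDerivAt_polyGaussConv P μ hq.2).fderiv
    exact (((ih _).sub ((contDiffOn_const.mul contDiffOn_snd).mul (ih _))).smul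
      contDiffOn_const).sub ((ih _).smul contDiffOn_const)

variable {c z : ℝ}

lemma hasDerivAt_polyGaussConv_fst (hc : 0 < c) :
    HasDerivAt (fun z => polyGaussConv P μ (z, c))
      (polyGaussConv (derivative P) μ (z, c) - 2 * c * polyGaussConv (X * P) μ (z, c)) z := by
  simpa [Function.comp_def] using (hasFDerivAt_polyGaussConv P μ (q := (z, c)) hc).comp_hasDerivAt z
    ((hasDerivAt_id z).prodMk (hasDerivAt_const z c))

lemma hasDerivAt_polyGaussConv_snd (hc : 0 < c) :
    HasDerivAt (fun c => polyGaussConv P μ (z, c)) (-polyGaussConv (X ^ 2 * P) μ (z, c)) c := by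
  simpa [Function.comp_def] using (hasFDerivAt_polyGaussConv P μ (q := (z, c)) hc).comp_hasDerivAt c
    ((hasDerivAt_const c z).prodMk (hasDerivAt_id c))

lemma deriv_deriv_polyGaussConv_one (hc : 0 < c) :
    deriv (deriv fun z => polyGaussConv 1 μ (z, c)) z =
      4 * c ^ 2 * polyGaussConv (X ^ 2) μ (z, c) - 2 * c * polyGaussConv 1 μ (z, c) := by
  have hfirst : deriv (fun z => polyGaussConv 1 μ (z, c)) =
      fun z => -(2 * c) * polyGaussConv X μ (z, c) := by
    ext z
    simpa [polyGaussConv, polyGauss] using (hasDerivAt_polyGaussConv_fst 1 μ hc).deriv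
  rw [hfirst, ((hasDerivAt_polyGaussConv_fst X μ hc).const_mul _).deriv, derivative_X, ← sq]
  ring

end PolyGauss

section HeatFlow

open Set

lemma hasDerivAt_const_mul_rpow {a s : ℝ} (ha : a ≠ 0) (hs : s ≠ 0) (p : ℝ) :
    HasDerivAt (fun s => (a * s) ^ p) (p * s⁻¹ * (a * s) ^ p) s := by
  have has : a * s ≠ 0 := mul_ne_zero ha hs
  refine (((hasDerivAt_id' s).const_mul a).rpow_const (Or.inl has)).congr_deriv ?_
  rw [rpow_sub_one has]
  field_simp

/-- The density at time `s` of a Brownian motion started from `μ`, i.e. the convolution of `μ` with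
the heat kernel of `∂ₛ - (1/2) ∂²`. Only `s > 0` is meaningful. -/
def heatFlow (μ : Measure ℝ) (z s : ℝ) : ℝ :=
  ∫ y, (2 * π * s) ^ (-(1 : ℝ) / 2) * exp (-(z - y) ^ 2 / (2 * s)) ∂μ

lemma heatFlow_eq_mul_polyGaussConv (μ : Measure ℝ) (z s : ℝ) :
    heatFlow μ z s = (2 * π * s) ^ (-(1 : ℝ) / 2) * polyGaussConv 1 μ (z, (2 * s)⁻¹) := by
  rw [heatFlow, integral_const_mul]
  simp [polyGaussConv, polyGauss, div_eq_inv_mul]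

variable (μ : Measure ℝ) [IsFiniteMeasure μ]

lemma contDiffOn_heatFlow :
    ContDiffOn ℝ (⊤ : ℕ∞) (fun q : ℝ × ℝ => heatFlow μ q.1 q.2) (univ ×ˢ Ioi 0) := by
  have hpos : ∀ q ∈ (univ ×ˢ Ioi 0 : Set (ℝ × ℝ)), 0 < q.2 := fun q hq => hq.2
  have hprefactor : ContDiffOn ℝ (⊤ : ℕ∞)
      (fun q : ℝ × ℝ => (2 * π * q.2) ^ (-(1 : ℝ) / 2)) (univ ×ˢ Ioi 0) :=
    .rpow_const_of_ne (by fun_prop) fun q hq => by have := hpos q hq; positivity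
  have hparam : ContDiffOn ℝ (⊤ : ℕ∞)
      (fun q : ℝ × ℝ => (q.1, (2 * q.2)⁻¹)) (univ ×ˢ Ioi 0) :=
    contDiffOn_fst.prodMk (.inv (by fun_prop) fun q hq => by have := hpos q hq; positivity)
  simp only [heatFlow_eq_mul_polyGaussConv]
  refine hprefactor.mul ((contDiffOn_polyGaussConv 1 μ).comp hparam fun q hq => ⟨trivial, ?_⟩)
  have := hpos q hq
  simpa

lemma differentiableAt_heatFlow (z : ℝ) {s : ℝ} (hs : 0 < s) :
    DifferentiableAt ℝ (fun q : ℝ × ℝ => heatFlow μ q.1 q.2) (z, s) :=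
  ((contDiffOn_heatFlow μ).contDiffAt
    (prod_mem_nhds Filter.univ_mem (Ioi_mem_nhds hs))).differentiableAt (by simp)

theorem heatFlow_heat_equation (z : ℝ) {s : ℝ} (hs : 0 < s) :
    deriv (fun s => heatFlow μ z s) s = 1 / 2 * deriv (deriv fun z => heatFlow μ z s) z := by
  have hc : 0 < (2 * s)⁻¹ := by positivity
  have hinv : HasDerivAt (fun s : ℝ => (2 * s)⁻¹) (-2 * (2 * s)⁻¹ ^ 2) s := by
    refine (((hasDerivAt_id' s).const_mul 2).fun_inv (by positivity)).congr_deriv ?_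
    field_simp
  have htime := (hasDerivAt_const_mul_rpow two_pi_pos.ne' hs.ne' (-(1 : ℝ) / 2)).mul
    ((hasDerivAt_polyGaussConv_snd 1 μ (z := z) hc).comp s hinv)
  simp only [heatFlow_eq_mul_polyGaussConv, deriv_const_mul_field', deriv_const_mul_field,
    deriv_deriv_polyGaussConv_one μ hc]
  rw [mul_one] at htime
  refine htime.deriv.trans ?_
  simp only [Function.comp]
  ring

end HeatFlow

section OURescaling

open Set

/-- The change of variables taking Brownian densities to Ornstein–Uhlenbeck densities:
`e^{t/2} X_t` has the law of a Brownian motion run for time `e^t - 1`, and the factor `e^{t/2}` is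
the Jacobian. -/
def ouRescaling (u : ℝ → ℝ → ℝ) (x t : ℝ) : ℝ :=
  exp (t / 2) * u (exp (t / 2) * x) (exp t - 1)

lemma contDiffOn_ouRescaling {n : WithTop ℕ∞} {u : ℝ → ℝ → ℝ}
    (hu : ContDiffOn ℝ n (fun q : ℝ × ℝ => u q.1 q.2) (univ ×ˢ Ioi 0)) :
    ContDiffOn ℝ n (fun q : ℝ × ℝ => ouRescaling u q.1 q.2) (univ ×ˢ Ioi 0) := by
  have hparam : ContDiff ℝ n fun q : ℝ × ℝ => (exp (q.2 / 2) * q.1, exp q.2 - 1) := by fun_prop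
  have hscale : ContDiff ℝ n fun q : ℝ × ℝ => exp (q.2 / 2) := by fun_prop
  exact hscale.contDiffOn.mul (hu.comp hparam.contDiffOn fun q hq => ⟨trivial, by simpa using hq⟩)

section Space

variable (u : ℝ → ℝ → ℝ) (x t : ℝ)

lemma deriv_ouRescaling_fst :
    deriv (fun x => ouRescaling u x t) x =
      exp t * deriv (fun z => u z (exp t - 1)) (exp (t / 2) * x) := by
  simp only [ouRescaling, deriv_const_mul_field]
  rw [deriv_comp_mul_left (exp (t / 2)) (fun z => u z (exp t - 1)), smul_eq_mul, ← mul_assoc,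
    ← exp_add, add_halves]

lemma deriv_deriv_ouRescaling_fst :
    deriv (deriv fun x => ouRescaling u x t) x =
      exp (t / 2) * exp t * deriv (deriv fun z => u z (exp t - 1)) (exp (t / 2) * x) := by
  simp only [funext fun x => deriv_ouRescaling_fst u x t, deriv_const_mul_field]
  rw [deriv_comp_mul_left (exp (t / 2)) (deriv fun z => u z (exp t - 1)), smul_eq_mul]
  ring

end Space

variable {u : ℝ → ℝ → ℝ} {x t : ℝ}

lemma deriv_mul_ouRescaling_fst
    (hu : DifferentiableAt ℝ (fun z => u z (exp t - 1)) (exp (t / 2) * x)) :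
    deriv (fun x => x * ouRescaling u x t) x =
      ouRescaling u x t + x * exp t * deriv (fun z => u z (exp t - 1)) (exp (t / 2) * x) := by
  have hp : DifferentiableAt ℝ (fun x => ouRescaling u x t) x :=
    (hu.comp x (by fun_prop)).const_mul _
  rw [deriv_fun_mul differentiableAt_fun_id hp, deriv_id'', one_mul, deriv_ouRescaling_fst,
    mul_assoc]

lemma deriv_ouRescaling_snd
    (hu : DifferentiableAt ℝ (fun q : ℝ × ℝ => u q.1 q.2) (exp (t / 2) * x, exp t - 1)) :
    deriv (fun t => ouRescaling u x t) t =
      1 / 2 * ouRescaling u x t +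
        1 / 2 * (x * exp t * deriv (fun z => u z (exp t - 1)) (exp (t / 2) * x)) +
        exp (t / 2) * exp t * deriv (fun s => u (exp (t / 2) * x) s) (exp t - 1) := by
  set L := fderiv ℝ (fun q : ℝ × ℝ => u q.1 q.2) (exp (t / 2) * x, exp t - 1)
  have hz : HasDerivAt (fun z => u z (exp t - 1)) (L (1, 0)) (exp (t / 2) * x) :=
    hu.hasFDerivAt.comp_hasDerivAt (f := fun z => (z, exp t - 1)) _
      ((hasDerivAt_id _).prodMk (hasDerivAt_const _ _))
  have hs : HasDerivAt (fun s => u (exp (t / 2) * x) s) (L (0, 1)) (exp t - 1) :=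
    hu.hasFDerivAt.comp_hasDerivAt (f := fun s => (exp (t / 2) * x, s)) _
      ((hasDerivAt_const _ _).prodMk (hasDerivAt_id _))
  have hscale : HasDerivAt (fun t => exp (t / 2)) (exp (t / 2) / 2) t := by
    simpa [div_eq_mul_inv] using ((hasDerivAt_id t).div_const 2).exp
  have hchain : HasDerivAt (fun t => u (exp (t / 2) * x) (exp t - 1))
      (L (exp (t / 2) / 2 * x, exp t)) t :=
    hu.hasFDerivAt.comp_hasDerivAt (f := fun t => (exp (t / 2) * x, exp t - 1)) t
      ((hscale.mul_const x).prodMk ((hasDerivAt_exp t).sub_const 1))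
  have hL : L (exp (t / 2) / 2 * x, exp t) = exp (t / 2) / 2 * x * L (1, 0) + exp t * L (0, 1) := by
    simp only [← smul_eq_mul (_ * x), ← smul_eq_mul (exp t), ← map_smul, ← map_add]
    simp
  have hsq : exp (t / 2) * exp (t / 2) = exp t := by rw [← exp_add, add_halves]
  refine (hscale.mul hchain).deriv.trans ?_
  rw [hz.deriv, hs.deriv, hL, ouRescaling]
  linear_combination x * L (1, 0) / 2 * hsq

theorem ouRescaling_fokker_planck
    (hu : DifferentiableAt ℝ (fun q : ℝ × ℝ => u q.1 q.2) (exp (t / 2) * x, exp t - 1))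
    (hheat : deriv (fun s => u (exp (t / 2) * x) s) (exp t - 1) =
      1 / 2 * deriv (deriv fun z => u z (exp t - 1)) (exp (t / 2) * x)) :
    deriv (fun t => ouRescaling u x t) t =
      1 / 2 * deriv (fun x => x * ouRescaling u x t) x +
        1 / 2 * deriv (deriv fun x => ouRescaling u x t) x := by
  have hz : DifferentiableAt ℝ (fun z => u z (exp t - 1)) (exp (t / 2) * x) :=
    hu.comp (f := fun z => (z, exp t - 1)) _ (by fun_prop)
  rw [deriv_ouRescaling_snd hu, hheat, deriv_mul_ouRescaling_fst hz, deriv_deriv_ouRescaling_fst]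
  ring

end OURescaling

lemma pMarg_eq_ouRescaling_heatFlow (μ : Measure ℝ) (x : ℝ) {t : ℝ} (ht : 0 < t) :
    pMarg μ x t = ouRescaling (heatFlow μ) x t := by
  have hscale : exp (t / 2) ^ 2 = exp t := by rw [← exp_nat_mul]; push_cast; ring_nf
  have hpos : 0 < exp t - 1 := by simpa using ht
  have hvar : 1 - exp (-t) = (exp (t / 2) ^ 2)⁻¹ * (exp t - 1) := by
    rw [hscale, mul_sub, inv_mul_cancel₀ (exp_ne_zero t), mul_one, exp_neg]
  have hprefactor : (2 * π * (1 - exp (-t))) ^ (-(1 : ℝ) / 2) =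
      exp (t / 2) * (2 * π * (exp t - 1)) ^ (-(1 : ℝ) / 2) := by
    rw [hvar, mul_left_comm, mul_rpow (by positivity) (by positivity),
      inv_rpow (by positivity), ← rpow_natCast, ← rpow_mul (by positivity),
      ← rpow_neg (by positivity)]
    norm_num
  have hexponent (y : ℝ) : -(x - y * exp (-t / 2)) ^ 2 / (2 * (1 - exp (-t))) =
      -(exp (t / 2) * x - y) ^ 2 / (2 * (exp t - 1)) := by
    rw [hvar, neg_div 2 t, exp_neg]
    field_simp
  simp only [pMarg, ouRescaling, heatFlow, hprefactor, hexponent, integral_const_mul]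
  rw [mul_assoc]

/-- The OU marginal density is smooth on `ℝ × (0,∞)` and satisfies the Fokker–Planck
equation `∂ₜ p = (1/2) ∂ₓ(x p) + (1/2) ∂ₓ² p`. -/
theorem pMarg_fokker_planck (μ : Measure ℝ) [IsFiniteMeasure μ] :
    ContDiffOn ℝ (⊤ : ℕ∞) (fun q : ℝ × ℝ => pMarg μ q.1 q.2) (Set.univ ×ˢ Set.Ioi 0) ∧
    ∀ x t : ℝ, 0 < t →
      deriv (fun s => pMarg μ x s) t =
        (1 / 2) * deriv (fun x' => x' * pMarg μ x' t) x +
          (1 / 2) * deriv (deriv (fun x' => pMarg μ x' t)) x := by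
  refine ⟨(contDiffOn_ouRescaling (contDiffOn_heatFlow μ)).congr fun q hq =>
    pMarg_eq_ouRescaling_heatFlow μ q.1 hq.2, fun x t ht => ?_⟩
  have hs : 0 < exp t - 1 := by simpa using ht
  have htime : (fun s => pMarg μ x s) =ᶠ[nhds t] fun s => ouRescaling (heatFlow μ) x s := by
    filter_upwards [lt_mem_nhds ht] with s hs using pMarg_eq_ouRescaling_heatFlow μ x hs
  simp only [htime.deriv_eq, fun z => pMarg_eq_ouRescaling_heatFlow μ z ht]
  exact ouRescaling_fokker_planck (differentiableAt_heatFlow μ _ hs)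
    (heatFlow_heat_equation μ _ hs)
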